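/- Let $\mathbf{s}$ be a staging of $\mathcal{X}_{[i]}$ in which every stage has exactly two context variables, and let $k$ be an index contained in the set of context variables of every stage in $\mathbf{s}$. Then any two distinct stages in $\mathbf{s}$ whose sets of context variables both contain a fixed second index $j \ne k$ and which assign the same outcome to coordinate $k$ must assign distinct outcomes to coordinate $j$; more precisely, for each fixed outcome $x_k \in \{0,\dots,d_k-1\}$, the stages of $\mathbf{s}$ whose context assigns $x_k$ to coordinate $k$ all share the same second context variable $j_{x_k}$, and they are exactly the $d_{j_{x_k}}$ stages $\mathcal{S}(x_{j_{x_k}} x_k)$ for $x_{j_{x_k}} \in \{0,\dots,d_{j_{x_k}}-1\}$. -/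

import Mathlib

/-!
Fix the outcome `v` of coordinate `k`. Every point of the fibre `x k = v` lies in a stage of the
form `𝒮(x_j v)` for some `j ≠ k` (`IsStaging.exists_pair_stage_mem`). If two points of the fibre
produced different second variables `j ≠ j'`, the corresponding stages would constrain different
coordinates outside `k`, hence would intersect; being members of a partition they would coincide,
which is impossible since a stage determines its context variables when all coordinates have at
least two outcomes (`pair_eq_of_stage_mem`). So one index `j` serves the whole fibre, and the
fibre is partitioned into the stages `𝒮(x_j v)`.
-/

open Finset

/-- The stage `𝒮(x_S)` with set of context variables `S` and stage-defining context given by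
the coordinates of `x` lying in `S`: the set of points of the level `∀ k : Fin i, Fin (d k)`
that agree with `x` on the coordinates in `S`. -/
def stage {i : ℕ} (d : Fin i → ℕ) (S : Finset (Fin i)) (x : ∀ k : Fin i, Fin (d k)) :
    Set (∀ k : Fin i, Fin (d k)) :=
  {y | ∀ k ∈ S, y k = x k}

/-- A staging of the level `∀ k : Fin i, Fin (d k)`: a partition of the level into
pairwise disjoint nonempty stages whose union is the whole level. -/
structure IsStaging {i : ℕ} (d : Fin i → ℕ)
    (𝔰 : Set (Set (∀ k : Fin i, Fin (d k)))) : Prop where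
  isStage : ∀ s ∈ 𝔰, ∃ S x, s = stage d S x
  nonempty : ∀ s ∈ 𝔰, s.Nonempty
  pairwiseDisjoint : ∀ s ∈ 𝔰, ∀ t ∈ 𝔰, s ≠ t → Disjoint s t
  covers : ∀ y, ∃ s ∈ 𝔰, y ∈ s

theorem mem_stage_self {i : ℕ} (d : Fin i → ℕ) (S : Finset (Fin i))
    (x : ∀ m : Fin i, Fin (d m)) : x ∈ stage d S x :=
  fun _ _ => rfl

theorem stage_eq_of_mem {i : ℕ} {d : Fin i → ℕ} {S : Finset (Fin i)}
    {x y : ∀ m : Fin i, Fin (d m)} (hy : y ∈ stage d S x) : stage d S x = stage d S y := by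
  ext z
  exact ⟨fun hz m hm => (hz m hm).trans (hy m hm).symm,
    fun hz m hm => (hz m hm).trans (hy m hm)⟩

theorem IsStaging.eq_of_mem {i : ℕ} {d : Fin i → ℕ} {𝔰 : Set (Set (∀ k : Fin i, Fin (d k)))}
    (h : IsStaging d 𝔰) {s t : Set (∀ k : Fin i, Fin (d k))} (hs : s ∈ 𝔰) (ht : t ∈ 𝔰)
    {y : ∀ k : Fin i, Fin (d k)} (hys : y ∈ s) (hyt : y ∈ t) : s = t := by
  by_contra hne
  exact Set.disjoint_left.mp (h.pairwiseDisjoint s hs t ht hne) hys hyt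

/-- Every point lies in a stage with context variables `{j, k}`, whose context may be read off
from the point itself. -/
theorem IsStaging.exists_pair_stage_mem {i : ℕ} {d : Fin i → ℕ}
    {𝔰 : Set (Set (∀ k : Fin i, Fin (d k)))} (h : IsStaging d 𝔰)
    (h2 : ∀ s ∈ 𝔰, ∃ S x, s = stage d S x ∧ S.card = 2) (k : Fin i)
    (hk : ∀ s ∈ 𝔰, ∀ (S : Finset (Fin i)) (x : ∀ m : Fin i, Fin (d m)),
      s = stage d S x → k ∈ S) (y : ∀ m : Fin i, Fin (d m)) :
    ∃ j : Fin i, j ≠ k ∧ stage d ({j, k} : Finset (Fin i)) y ∈ 𝔰 := by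
  obtain ⟨s, hs, hys⟩ := h.covers y
  obtain ⟨S, x, rfl, hS⟩ := h2 s hs
  have hkS : k ∈ S := hk _ hs S x rfl
  have hcard : (S.erase k).card = 1 := by rw [Finset.card_erase_of_mem hkS, hS]
  obtain ⟨j, hj⟩ := Finset.card_eq_one.mp hcard
  have hjS : S = {j, k} := by
    rw [← Finset.insert_erase hkS, hj, Finset.pair_comm]
  refine ⟨j, ?_, ?_⟩
  · exact Finset.ne_of_mem_erase (hj ▸ Finset.mem_singleton_self j)
  · rw [← hjS, ← stage_eq_of_mem hys]
    exact hs

/-- Stages over the same outcome of `k` have the same second context variable. -/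
theorem pair_eq_of_stage_mem {i : ℕ} {d : Fin i → ℕ} (hd : ∀ m, 2 ≤ d m)
    {𝔰 : Set (Set (∀ k : Fin i, Fin (d k)))} (h : IsStaging d 𝔰)
    {j j' k : Fin i} (hj' : j' ≠ k) {x y : ∀ m : Fin i, Fin (d m)}
    (hxy : x k = y k)
    (hy : stage d ({j, k} : Finset (Fin i)) y ∈ 𝔰)
    (hx : stage d ({j', k} : Finset (Fin i)) x ∈ 𝔰) : j' = j := by
  by_contra hne
  -- Changing the coordinate `j'` keeps `y` in its stage, as `j'` is not a context variable there.
  have hupd : ∀ a : Fin (d j'),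
      Function.update y j' a ∈ stage d ({j, k} : Finset (Fin i)) y := by
    intro a m hm
    have hm' : m ≠ j' := by
      rintro rfl
      simp [hne, hj'] at hm
    exact Function.update_of_ne hm' a y
  have hmeet : Function.update y j' (x j') ∈ stage d ({j', k} : Finset (Fin i)) x := by
    intro m hm
    rcases Finset.mem_insert.mp hm with rfl | hm
    · exact Function.update_self ..
    · obtain rfl := Finset.mem_singleton.mp hm
      rw [Function.update_of_ne hj'.symm, hxy]
  have heq := h.eq_of_mem hy hx (hupd _) hmeet
  have : Nontrivial (Fin (d j')) := Fin.nontrivial_iff_two_le.mpr (hd j')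
  obtain ⟨a, ha⟩ := exists_ne (x j')
  have hmem : Function.update y j' a ∈ stage d ({j', k} : Finset (Fin i)) x := heq ▸ hupd a
  exact ha (by simpa using hmem j' (Finset.mem_insert_self _ _))

/-- Let `𝔰` be a staging in which every stage has exactly two context variables, and let `k` be
an index contained in the set of context variables of every stage.  Then for each fixed outcome
`v` of coordinate `k`, the stages of `𝔰` whose context assigns `v` to coordinate `k` all share
the same second context variable `j ≠ k`, and they are exactly the stages `𝒮(x_j v)` as `x_j`
ranges over the outcomes of coordinate `j` (in particular, distinct such stages assign distinct
outcomes to coordinate `j`). -/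
theorem staging_two_context_variables_fibers
    (i : ℕ) (hi : 2 ≤ i) (d : Fin i → ℕ) (hd : ∀ m, 2 ≤ d m)
    (𝔰 : Set (Set (∀ k : Fin i, Fin (d k)))) (h : IsStaging d 𝔰)
    (h2 : ∀ s ∈ 𝔰, ∃ S x, s = stage d S x ∧ S.card = 2)
    (k : Fin i)
    (hk : ∀ s ∈ 𝔰, ∀ (S : Finset (Fin i)) (x : ∀ m : Fin i, Fin (d m)),
      s = stage d S x → k ∈ S) :
    ∀ v : Fin (d k), ∃ j : Fin i, j ≠ k ∧
      {s | s ∈ 𝔰 ∧ ∃ (S : Finset (Fin i)) (x : ∀ m : Fin i, Fin (d m)),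
          k ∈ S ∧ x k = v ∧ s = stage d S x}
        = {s | ∃ x : ∀ m : Fin i, Fin (d m),
            x k = v ∧ s = stage d ({j, k} : Finset (Fin i)) x} := by
  intro v
  have hpos : ∀ m, 0 < d m := fun m => lt_of_lt_of_le Nat.zero_lt_two (hd m)
  let y : ∀ m : Fin i, Fin (d m) := Function.update (fun m => ⟨0, hpos m⟩) k v
  have hyk : y k = v := Function.update_self ..
  obtain ⟨j, hjk, hy⟩ := h.exists_pair_stage_mem h2 k hk y
  have key : ∀ x : ∀ m : Fin i, Fin (d m), x k = v →
      stage d ({j, k} : Finset (Fin i)) x ∈ 𝔰 := by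
    intro x hx
    obtain ⟨j', hj', hx'⟩ := h.exists_pair_stage_mem h2 k hk x
    rwa [pair_eq_of_stage_mem hd h hj' (hx.trans hyk.symm) hy hx'] at hx'
  refine ⟨j, hjk, Set.ext fun s => ⟨?_, ?_⟩⟩
  · rintro ⟨hs, S, x, -, hx, rfl⟩
    exact ⟨x, hx, h.eq_of_mem hs (key x hx) (mem_stage_self d S x) (mem_stage_self d _ x)⟩
  · rintro ⟨x, hx, rfl⟩
    exact ⟨key x hx, {j, k}, x, by simp, hx, rfl⟩
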